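/- Positivity preservation of the first-order multidimensional scheme with source term (Theorem 4.1, one cell, one step): Let d = 2, N ≥ 1, |K| > 0, edge lengths ℓ₁,…,ℓ_N > 0 and unit outward normals ξ⁽¹⁾,…,ξ⁽ᴺ⁾ ∈ ℝ² with Σⱼ ℓⱼ ξ⁽ʲ⁾ = 0 (Green's identity for a polygon). Let Ū_K ∈ 𝒢 (cell average, with density ρ̄_K and magnetic field B̄_K) and Ūⱼ ∈ 𝒢 (neighbor averages, with magnetic fields B̄ⱼ) for j = 1,…,N. For each j let wave speeds satisfy σⱼʳ ≥ α_r(Ūⱼ, Ū_K; ξ⁽ʲ⁾) and σⱼˡ ≤ α_l(Ū_K, Ūⱼ; ξ⁽ʲ⁾), and set σⱼ⁺ = max{σⱼʳ, 0}, σⱼ⁻ = min{σⱼˡ, 0}. Define the discrete divergence div = |K|⁻¹ Σⱼ ℓⱼ ⟨ξ⁽ʲ⁾, (σⱼ⁺ B̄_K − σⱼ⁻ B̄ⱼ)/(σⱼ⁺ − σⱼ⁻)⟩, and the update Ū' = Ū_K − (Δt/|K|) Σⱼ ℓⱼ F̂(Ū_K, Ūⱼ; ξ⁽ʲ⁾)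 − Δt·div·S(Ū_K) with Δt > 0. If Δt·[ |K|⁻¹ Σⱼ ℓⱼ(−σⱼ⁻) + |div|/√ρ̄_K ] < 1, then Ū' ∈ 𝒢. -/

import Mathlib

noncomputable section

open Finset

/-- An MHD state `U = (ρ, m, B, E)` viewed as a vector in `ℝ⁸`. -/
abbrev MHDState := Fin 8 → ℝ

namespace MHD

/-- Build a state from density, momentum, magnetic field, total energy. -/
def mk (ρ : ℝ) (m B : Fin 3 → ℝ) (E : ℝ) : MHDState :=
  ![ρ, m 0, m 1, m 2, B 0, B 1, B 2, E]

/-- Density component. -/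
def dens (U : MHDState) : ℝ := U 0

/-- Momentum components. -/
def mom (U : MHDState) : Fin 3 → ℝ := ![U 1, U 2, U 3]

/-- Magnetic field components. -/
def magB (U : MHDState) : Fin 3 → ℝ := ![U 4, U 5, U 6]

/-- Total energy component. -/
def toten (U : MHDState) : ℝ := U 7

/-- Euclidean dot product on `ℝ³`. -/
def dot3 (a b : Fin 3 → ℝ) : ℝ := ∑ k, a k * b k

/-- Squared Euclidean norm on `ℝ³`. -/
def sq3 (a : Fin 3 → ℝ) : ℝ := dot3 a a

/-- Euclidean norm on `ℝ³`. -/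
def norm3 (a : Fin 3 → ℝ) : ℝ := Real.sqrt (sq3 a)

/-- Velocity `v = m / ρ`. -/
def vel (U : MHDState) : Fin 3 → ℝ := fun k => mom U k / dens U

/-- Internal energy `𝓔(U) = E − (|m|²/ρ + |B|²)/2`. -/
def intE (U : MHDState) : ℝ := toten U - (sq3 (mom U) / dens U + sq3 (magB U)) / 2

/-- Specific internal energy `e = 𝓔(U)/ρ`. -/
def specE (U : MHDState) : ℝ := intE U / dens U

/-- The admissible state set `𝒢`. -/
def Gset : Set MHDState := {U | 0 < dens U ∧ 0 < intE U}

/-- The set `𝒢_ρ` of states with positive density. -/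
def Grho : Set MHDState := {U | 0 < dens U}

/-- Euclidean dot product on `ℝ⁸`. -/
def dot8 (U V : MHDState) : ℝ := ∑ i, U i * V i

/-- The vector `n* = (|v*|²/2, −v*, −B*, 1)`. -/
def nstar (vs Bs : Fin 3 → ℝ) : MHDState :=
  mk (sq3 vs / 2) (fun k => -vs k) (fun k => -Bs k) 1

/-- The set `𝒢*`. -/
def GstarSet : Set MHDState :=
  {U | 0 < dens U ∧ ∀ vs Bs : Fin 3 → ℝ, 0 < dot8 U (nstar vs Bs) + sq3 Bs / 2}

/-- Equation of state assumption: for `ρ > 0`, `e > 0 ↔ p(ρ,e) > 0`. -/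
def IsEOS (pfun : ℝ → ℝ → ℝ) : Prop :=
  ∀ ρ e : ℝ, 0 < ρ → (0 < e ↔ 0 < pfun ρ e)

/-- Pressure of a state, via the equation of state. -/
def pres (pfun : ℝ → ℝ → ℝ) (U : MHDState) : ℝ := pfun (dens U) (specE U)

/-- Total pressure `p + |B|²/2`. -/
def ptot (pfun : ℝ → ℝ → ℝ) (U : MHDState) : ℝ := pres pfun U + sq3 (magB U) / 2

/-- The `i`-th flux `F_i(U)`. -/
def flux (pfun : ℝ → ℝ → ℝ) (i : Fin 3) (U : MHDState) : MHDState :=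
  mk (dens U * vel U i)
    (fun k => dens U * vel U i * vel U k - magB U i * magB U k
      + ptot pfun U * (if k = i then 1 else 0))
    (fun k => vel U i * magB U k - magB U i * vel U k)
    (vel U i * (toten U + ptot pfun U) - magB U i * dot3 (vel U) (magB U))

/-- Directional inner product `⟨ξ, w⟩ = Σ_{k<d} ξ_k w_k` for `ξ ∈ ℝ^d`, `w ∈ ℝ³`, `d ≤ 3`. -/
def dirDot {d : ℕ} (hd : d ≤ 3) (ξ : Fin d → ℝ) (w : Fin 3 → ℝ) : ℝ :=
  ∑ k, ξ k * w (Fin.castLE hd k)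

/-- Directional flux `⟨ξ, F(U)⟩ = Σ_{i<d} ξ_i F_i(U)`. -/
def dirFlux (pfun : ℝ → ℝ → ℝ) {d : ℕ} (hd : d ≤ 3) (ξ : Fin d → ℝ) (U : MHDState) :
    MHDState :=
  ∑ i, ξ i • flux pfun (Fin.castLE hd i) U

/-- `ξ` is a unit vector. -/
def unitVec {d : ℕ} (ξ : Fin d → ℝ) : Prop := (∑ k, (ξ k) ^ 2) = 1

/-- `𝒞_s(U) = p / (ρ √(2e))`. -/
def soundC (pfun : ℝ → ℝ → ℝ) (U : MHDState) : ℝ :=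
  pres pfun U / (dens U * Real.sqrt (2 * specE U))

/-- `𝒞(U; ξ)`. -/
def waveC (pfun : ℝ → ℝ → ℝ) {d : ℕ} (hd : d ≤ 3) (ξ : Fin d → ℝ) (U : MHDState) : ℝ :=
  Real.sqrt ((soundC pfun U ^ 2 + sq3 (magB U) / dens U
    + Real.sqrt ((soundC pfun U ^ 2 + sq3 (magB U) / dens U) ^ 2
      - 4 * soundC pfun U ^ 2 * dirDot hd ξ (magB U) ^ 2 / dens U)) / 2)

/-- Roe-type averaged velocity `v̄ = (√ρ v + √ρ̃ ṽ)/(√ρ + √ρ̃)`. -/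
def roeV (U Ut : MHDState) : Fin 3 → ℝ := fun k =>
  (Real.sqrt (dens U) * vel U k + Real.sqrt (dens Ut) * vel Ut k)
    / (Real.sqrt (dens U) + Real.sqrt (dens Ut))

/-- `α_r(U, Ũ; ξ)`. -/
def alphaR (pfun : ℝ → ℝ → ℝ) {d : ℕ} (hd : d ≤ 3) (ξ : Fin d → ℝ) (U Ut : MHDState) : ℝ :=
  max (dirDot hd ξ (vel U)) (dirDot hd ξ (roeV U Ut)) + waveC pfun hd ξ U
    + norm3 (magB U - magB Ut) / (Real.sqrt (dens U) + Real.sqrt (dens Ut))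

/-- `α_l(U, Ũ; ξ)`. -/
def alphaL (pfun : ℝ → ℝ → ℝ) {d : ℕ} (hd : d ≤ 3) (ξ : Fin d → ℝ) (U Ut : MHDState) : ℝ :=
  min (dirDot hd ξ (vel U)) (dirDot hd ξ (roeV U Ut)) - waveC pfun hd ξ U
    - norm3 (magB U - magB Ut) / (Real.sqrt (dens U) + Real.sqrt (dens Ut))

/-- `α_⋆(U, Ũ; ξ)`. -/
def alphaS (pfun : ℝ → ℝ → ℝ) {d : ℕ} (hd : d ≤ 3) (ξ : Fin d → ℝ) (U Ut : MHDState) : ℝ :=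
  max (|dirDot hd ξ (vel U)|) (|dirDot hd ξ (roeV U Ut)|) + waveC pfun hd ξ U
    + norm3 (magB U - magB Ut) / (Real.sqrt (dens U) + Real.sqrt (dens Ut))

/-- The vector `θ(U, v*, B*) = 2^{−1/2}(B − B*, √ρ(v − v*), √(2ρe)) ∈ ℝ⁷`. -/
def theta (U : MHDState) (vs Bs : Fin 3 → ℝ) : Fin 7 → ℝ :=
  ![(magB U 0 - Bs 0) / Real.sqrt 2,
    (magB U 1 - Bs 1) / Real.sqrt 2,
    (magB U 2 - Bs 2) / Real.sqrt 2,
    Real.sqrt (dens U) * (vel U 0 - vs 0) / Real.sqrt 2,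
    Real.sqrt (dens U) * (vel U 1 - vs 1) / Real.sqrt 2,
    Real.sqrt (dens U) * (vel U 2 - vs 2) / Real.sqrt 2,
    Real.sqrt (2 * intE U) / Real.sqrt 2]

/-- `|θ|²`. -/
def thetaSq (U : MHDState) (vs Bs : Fin 3 → ℝ) : ℝ := ∑ k, theta U vs Bs k ^ 2

/-- Godunov–Powell source vector `S(U) = (0, B, v, v·B)`. -/
def source (U : MHDState) : MHDState := mk 0 (magB U) (vel U) (dot3 (vel U) (magB U))

/-- HLL numerical flux with clamped wave speeds `σm ≤ 0 ≤ σp`. -/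
def hllFlux (pfun : ℝ → ℝ → ℝ) {d : ℕ} (hd : d ≤ 3) (ξ : Fin d → ℝ)
    (Um Up : MHDState) (σm σp : ℝ) : MHDState :=
  (σp - σm)⁻¹ • (σp • dirFlux pfun hd ξ Um - σm • dirFlux pfun hd ξ Up
    + (σm * σp) • (Up - Um))

/-- HLL intermediate state `H(U⁻, U⁺; ξ)`. -/
def hllMid (pfun : ℝ → ℝ → ℝ) {d : ℕ} (hd : d ≤ 3) (ξ : Fin d → ℝ)
    (Um Up : MHDState) (σm σp : ℝ) : MHDState :=
  (σp - σm)⁻¹ • (σp • Up - dirFlux pfun hd ξ Up - σm • Um + dirFlux pfun hd ξ Um)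

/-- The quantity `α̂_j` of Theorem 2.3. -/
def alphaHat (pfun : ℝ → ℝ → ℝ) {d : ℕ} (hd : d ≤ 3) {N : ℕ}
    (s : Fin N → ℝ) (ξ : Fin N → Fin d → ℝ) (U : Fin N → MHDState) (j : Fin N) : ℝ :=
  max (dirDot hd (ξ j) (vel (U j)))
      ((∑ i, s i)⁻¹ * ∑ i, s i * dirDot hd (fun k => ξ j k - ξ i k) (roeV (U j) (U i)))
  + waveC pfun hd (ξ j) (U j)
  + 2 * (∑ i, s i)⁻¹ * ∑ i, s i *
      (norm3 (magB (U j) - magB (U i)) / (Real.sqrt (dens (U j)) + Real.sqrt (dens (U i))))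

def d1le3 : (1 : ℕ) ≤ 3 := by omega
def d2le3 : (2 : ℕ) ≤ 3 := by omega

/-- In one dimension the direction `ξ = 1`. -/
def xi1 : Fin 1 → ℝ := fun _ => 1

/-!
Admissibility is linear in disguise: `U ∈ 𝒢` iff `ρ > 0` and the relative energy
`U · n* + |B*|² / 2` is positive for every `v*`, `B*`. For a single state, the flux
`⟨ξ, F(U)⟩ · n*` is at most a wave speed times the relative energy, up to a jump term controlled
by the Roe average and terms linear in `⟨ξ, B⟩` and `⟨ξ, v*⟩`; the bound on the main term holds
because `𝒞²` is the larger eigenvalue of a `2 × 2` quadratic form. Adding this bound for `U⁺` in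
direction `ξ` and for `U⁻` in direction `-ξ` shows that the relative energy of the HLL
intermediate state is nonnegative up to a multiple of `(⟨ξ, B⁺⟩ - ⟨ξ, B⁻⟩) (v* · B*)`.

By Green's identity the update is a combination of `Ū_K` and the HLL states minus
`Δt div S(Ū_K)`, and the normal jumps of `B` add up to exactly the discrete divergence. The source
contributes `Δt div (v* · B*)`, cancelling them, and leaves `-Δt div (v - v*) · (B - B*)`, which
is at most `Δt |div| / √ρ̄_K` times the relative energy of `Ū_K` in absolute value and is absorbed
by the CFL condition.
-/

open WithLp (toLp)
open scoped RealInnerProductSpace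

section FastSpeed

theorem quadForm_le_mul_add_sq {p q r l : ℝ} (htr : p + r ≤ 2 * l)
    (hdet : q ^ 2 ≤ (l - p) * (l - r)) (x y : ℝ) :
    p * x ^ 2 + 2 * q * x * y + r * y ^ 2 ≤ l * (x ^ 2 + y ^ 2) := by
  have hprod : 0 ≤ (l - p) * (l - r) := (sq_nonneg q).trans hdet
  have hp : 0 ≤ l - p := by
    by_contra! h
    exact hprod.not_gt (mul_neg_of_neg_of_pos h (by linarith))
  have hr : 0 ≤ l - r := by
    by_contra! h
    exact hprod.not_gt (mul_neg_of_pos_of_neg (by linarith) h)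
  have hcross : (2 * q * x * y) ^ 2 ≤ ((l - p) * x ^ 2 + (l - r) * y ^ 2) ^ 2 :=
    calc (2 * q * x * y) ^ 2 = 4 * (x * y) ^ 2 * q ^ 2 := by ring
      _ ≤ 4 * (x * y) ^ 2 * ((l - p) * (l - r)) := by gcongr
      _ = 4 * ((l - p) * x ^ 2) * ((l - r) * y ^ 2) := by ring
      _ ≤ ((l - p) * x ^ 2 + (l - r) * y ^ 2) ^ 2 := four_mul_le_sq_add _ _
  linarith [le_of_abs_le (abs_le_of_sq_le_sq hcross (by positivity))]

variable {V : Type*} [NormedAddCommGroup V] [InnerProductSpace ℝ V] {e : V}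

theorem norm_sub_inner_smul_sq (he : ‖e‖ = 1) (x : V) :
    ‖x - ⟪e, x⟫ • e‖ ^ 2 = ‖x‖ ^ 2 - ⟪e, x⟫ ^ 2 := by
  rw [norm_sub_sq_real, norm_smul, he, real_inner_smul_right, real_inner_comm, mul_one,
    Real.norm_eq_abs, sq_abs]
  ring

/- `htr` and `hchar` say that `l` is at least the larger root of the characteristic polynomial, the
square of the fast magnetosonic speed for sound speed `a` and Alfvén velocity `β`. -/
theorem norm_inner_smul_sub_sq_add_le (he : ‖e‖ = 1) {β : V} {a l : ℝ}
    (htr : a ^ 2 + ‖β‖ ^ 2 ≤ 2 * l)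
    (hchar : 0 ≤ l ^ 2 - (a ^ 2 + ‖β‖ ^ 2) * l + a ^ 2 * ⟪e, β⟫ ^ 2) (x : V) :
    ‖⟪e, x⟫ • β - ⟪e, β⟫ • x‖ ^ 2 + (a * ⟪e, x⟫) ^ 2 ≤ l * ‖x‖ ^ 2 := by
  set y := x - ⟪e, x⟫ • e with hy
  set g := β - ⟪e, β⟫ • e with hg
  have hy2 : ‖y‖ ^ 2 = ‖x‖ ^ 2 - ⟪e, x⟫ ^ 2 := norm_sub_inner_smul_sq he x
  have hg2 : ‖g‖ ^ 2 = ‖β‖ ^ 2 - ⟪e, β⟫ ^ 2 := norm_sub_inner_smul_sq he β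
  have htri : ‖⟪e, x⟫ • β - ⟪e, β⟫ • x‖ ≤ |⟪e, x⟫| * ‖g‖ + |⟪e, β⟫| * ‖y‖ :=
    calc ‖⟪e, x⟫ • β - ⟪e, β⟫ • x‖ = ‖⟪e, x⟫ • g - ⟪e, β⟫ • y‖ := by
          rw [hy, hg]; congr 1; module
      _ ≤ ‖⟪e, x⟫ • g‖ + ‖⟪e, β⟫ • y‖ := norm_sub_le _ _
      _ = |⟪e, x⟫| * ‖g‖ + |⟪e, β⟫| * ‖y‖ := by simp only [norm_smul, Real.norm_eq_abs]
  have hquad := quadForm_le_mul_add_sq (p := a ^ 2 + ‖g‖ ^ 2) (q := ‖g‖ * |⟪e, β⟫|)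
    (r := ⟪e, β⟫ ^ 2) (l := l) (by linarith)
    (by rw [mul_pow, sq_abs, hg2]; linarith) |⟪e, x⟫| ‖y‖
  calc ‖⟪e, x⟫ • β - ⟪e, β⟫ • x‖ ^ 2 + (a * ⟪e, x⟫) ^ 2
      ≤ (|⟪e, x⟫| * ‖g‖ + |⟪e, β⟫| * ‖y‖) ^ 2 + (a * |⟪e, x⟫|) ^ 2 := by
        rw [mul_pow a, mul_pow a, sq_abs]; gcongr
    _ = (a ^ 2 + ‖g‖ ^ 2) * |⟪e, x⟫| ^ 2 + 2 * (‖g‖ * |⟪e, β⟫|) * |⟪e, x⟫| * ‖y‖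
        + ⟪e, β⟫ ^ 2 * ‖y‖ ^ 2 := by rw [← sq_abs ⟪e, β⟫]; ring
    _ ≤ l * (|⟪e, x⟫| ^ 2 + ‖y‖ ^ 2) := hquad
    _ = l * ‖x‖ ^ 2 := by rw [hy2, sq_abs]; ring

theorem inner_add_mul_le_of_norm_sq_add_sq_le {w x : V} {c s : ℝ} (hc : 0 ≤ c)
    (h : ‖w‖ ^ 2 + s ^ 2 ≤ c ^ 2 * ‖x‖ ^ 2) (b : V) (z : ℝ) :
    ⟪w, b⟫ + s * z ≤ c * ((‖x‖ ^ 2 + ‖b‖ ^ 2 + z ^ 2) / 2) := by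
  let P : WithLp 2 (V × ℝ) := WithLp.toLp 2 (w, s)
  let Q : WithLp 2 (V × ℝ) := WithLp.toLp 2 (b, z)
  have hinner : ⟪w, b⟫ + s * z = ⟪P, Q⟫ := by
    simp [P, Q, WithLp.prod_inner_apply, mul_comm]
  have hP : ‖P‖ ≤ c * ‖x‖ := by
    refine le_of_sq_le_sq ?_ (by positivity)
    simpa [P, WithLp.prod_norm_sq_eq_of_L2, mul_pow] using h
  have hQ : ‖Q‖ ^ 2 = ‖b‖ ^ 2 + z ^ 2 := by simp [Q, WithLp.prod_norm_sq_eq_of_L2]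
  calc ⟪w, b⟫ + s * z ≤ ‖P‖ * ‖Q‖ := hinner.trans_le (real_inner_le_norm P Q)
    _ ≤ c * ‖x‖ * ‖Q‖ := by gcongr
    _ = c * (2 * ‖x‖ * ‖Q‖ / 2) := by ring
    _ ≤ c * ((‖x‖ ^ 2 + ‖Q‖ ^ 2) / 2) := by gcongr; exact two_mul_le_add_sq _ _
    _ = c * ((‖x‖ ^ 2 + ‖b‖ ^ 2 + z ^ 2) / 2) := by rw [hQ]; ring

theorem fast_coupling_le (he : ‖e‖ = 1) {β : V} {a c : ℝ} (hc : 0 ≤ c)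
    (htr : a ^ 2 + ‖β‖ ^ 2 ≤ 2 * c ^ 2)
    (hchar : 0 ≤ (c ^ 2) ^ 2 - (a ^ 2 + ‖β‖ ^ 2) * c ^ 2 + a ^ 2 * ⟪e, β⟫ ^ 2)
    (x b : V) (z : ℝ) :
    ⟪e, x⟫ * (a * z + ⟪β, b⟫) - ⟪e, β⟫ * ⟪x, b⟫
      ≤ c * ((‖x‖ ^ 2 + ‖b‖ ^ 2 + z ^ 2) / 2) := by
  have h := inner_add_mul_le_of_norm_sq_add_sq_le hc
    (norm_inner_smul_sub_sq_add_le he htr hchar x) b z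
  rw [inner_sub_left, real_inner_smul_left, real_inner_smul_left] at h
  linarith

theorem neg_inner_add_mul_norm_sq_sub_le (he : ‖e‖ = 1) (x₁ x₂ b₁ b₂ : V) :
    -⟪e, x₁ + x₂⟫ * ((‖b₁‖ ^ 2 - ‖b₂‖ ^ 2) / 2)
      ≤ ‖b₁ - b₂‖ * ((‖x₁‖ ^ 2 + ‖b₁‖ ^ 2) / 2 + (‖x₂‖ ^ 2 + ‖b₂‖ ^ 2) / 2) := by
  have hx : |-⟪e, x₁ + x₂⟫| ≤ ‖x₁ + x₂‖ := by
    simpa only [abs_neg, he, one_mul] using abs_real_inner_le_norm e (x₁ + x₂)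
  have hb : |‖b₁‖ ^ 2 - ‖b₂‖ ^ 2| ≤ ‖b₁ + b₂‖ * ‖b₁ - b₂‖ := by
    have h : ⟪b₁ + b₂, b₁ - b₂⟫ = ‖b₁‖ ^ 2 - ‖b₂‖ ^ 2 := by
      simp only [inner_add_left, inner_sub_right, real_inner_self_eq_norm_sq,
        real_inner_comm b₁ b₂]
      ring
    simpa only [h] using abs_real_inner_le_norm (b₁ + b₂) (b₁ - b₂)
  have hyoung : ‖x₁ + x₂‖ * ‖b₁ + b₂‖ ≤ ‖x₁‖ ^ 2 + ‖x₂‖ ^ 2 + (‖b₁‖ ^ 2 + ‖b₂‖ ^ 2) := by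
    have hxx := parallelogram_law_with_norm ℝ x₁ x₂
    have hbb := parallelogram_law_with_norm ℝ b₁ b₂
    linarith [two_mul_le_add_sq ‖x₁ + x₂‖ ‖b₁ + b₂‖, mul_self_nonneg ‖x₁ - x₂‖,
      mul_self_nonneg ‖b₁ - b₂‖]
  calc -⟪e, x₁ + x₂⟫ * ((‖b₁‖ ^ 2 - ‖b₂‖ ^ 2) / 2)
      ≤ |-⟪e, x₁ + x₂⟫| * (|‖b₁‖ ^ 2 - ‖b₂‖ ^ 2| / 2) := by
        rw [← abs_two (α := ℝ), ← abs_div, ← abs_mul, abs_two]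
        exact le_abs_self _
    _ ≤ ‖x₁ + x₂‖ * (‖b₁ + b₂‖ * ‖b₁ - b₂‖ / 2) := by gcongr
    _ = ‖b₁ - b₂‖ * (‖x₁ + x₂‖ * ‖b₁ + b₂‖ / 2) := by ring
    _ ≤ ‖b₁ - b₂‖ * ((‖x₁‖ ^ 2 + ‖x₂‖ ^ 2 + (‖b₁‖ ^ 2 + ‖b₂‖ ^ 2)) / 2) := by gcongr
    _ = ‖b₁ - b₂‖ * ((‖x₁‖ ^ 2 + ‖b₁‖ ^ 2) / 2 + (‖x₂‖ ^ 2 + ‖b₂‖ ^ 2) / 2) := by ring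

end FastSpeed

section Directions

theorem inner_toLp (a b : Fin 3 → ℝ) : ⟪toLp 2 a, toLp 2 b⟫ = dot3 a b := by
  simp [dot3, PiLp.inner_apply, mul_comm]

theorem smul_dot3 (t : ℝ) (a b : Fin 3 → ℝ) : dot3 (t • a) b = t * dot3 a b :=
  smul_dotProduct t a b

theorem dot3_smul (t : ℝ) (a b : Fin 3 → ℝ) : dot3 a (t • b) = t * dot3 a b :=
  dotProduct_smul t a b

theorem norm_toLp_sq (a : Fin 3 → ℝ) : ‖toLp 2 a‖ ^ 2 = sq3 a := by
  rw [← real_inner_self_eq_norm_sq, inner_toLp, sq3]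

theorem sq3_nonneg (a : Fin 3 → ℝ) : 0 ≤ sq3 a := norm_toLp_sq a ▸ sq_nonneg _

theorem norm_toLp (a : Fin 3 → ℝ) : ‖toLp 2 a‖ = norm3 a := by
  rw [norm3, ← norm_toLp_sq, Real.sqrt_sq (norm_nonneg _)]

theorem norm3_sub_comm (a b : Fin 3 → ℝ) : norm3 (a - b) = norm3 (b - a) := by
  rw [← norm_toLp, ← norm_toLp, WithLp.toLp_sub, norm_sub_rev, WithLp.toLp_sub]

variable {d : ℕ} (hd : d ≤ 3)

/-- The direction `ξ ∈ ℝ^d` as a vector of `ℝ³`, its missing coordinates being zero. -/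
def spatialDir (ξ : Fin d → ℝ) : EuclideanSpace ℝ (Fin 3) :=
  toLp 2 (Function.extend (Fin.castLE hd) ξ 0)

theorem inner_spatialDir (ξ : Fin d → ℝ) (w : Fin 3 → ℝ) :
    ⟪spatialDir hd ξ, toLp 2 w⟫ = dirDot hd ξ w := by
  have hinj : Function.Injective (Fin.castLE hd) := Fin.castLE_injective hd
  rw [spatialDir, inner_toLp, dot3, dirDot]
  refine (Fintype.sum_of_injective _ hinj _ _ (fun k hk => ?_) fun k => ?_).symm
  · rw [Function.extend_apply' _ _ _ hk, Pi.zero_apply, zero_mul]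
  · rw [hinj.extend_apply]

theorem norm_spatialDir {ξ : Fin d → ℝ} (hξ : unitVec ξ) : ‖spatialDir hd ξ‖ = 1 := by
  have h : ‖spatialDir hd ξ‖ ^ 2 = 1 := by
    rw [← real_inner_self_eq_norm_sq, ← hξ]
    refine (inner_spatialDir hd ξ _).trans (Finset.sum_congr rfl fun k _ => ?_)
    rw [(Fin.castLE_injective hd).extend_apply, sq]
  exact (pow_eq_one_iff_of_nonneg (norm_nonneg _) two_ne_zero).1 h

theorem dirDot_sq_le {ξ : Fin d → ℝ} (hξ : unitVec ξ) (w : Fin 3 → ℝ) :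
    dirDot hd ξ w ^ 2 ≤ sq3 w := by
  rw [← inner_spatialDir, ← norm_toLp_sq]
  refine sq_le_sq' (abs_le.1 ?_).1 (abs_le.1 ?_).2 <;>
    simpa [norm_spatialDir hd hξ] using abs_real_inner_le_norm (spatialDir hd ξ) (toLp 2 w)

theorem dirDot_add (ξ : Fin d → ℝ) (w w' : Fin 3 → ℝ) :
    dirDot hd ξ (w + w') = dirDot hd ξ w + dirDot hd ξ w' :=
  dotProduct_add ξ (w ∘ Fin.castLE hd) (w' ∘ Fin.castLE hd)

theorem dirDot_smul (ξ : Fin d → ℝ) (t : ℝ) (w : Fin 3 → ℝ) :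
    dirDot hd ξ (t • w) = t * dirDot hd ξ w :=
  dotProduct_smul t ξ (w ∘ Fin.castLE hd)

theorem dirDot_sub (ξ : Fin d → ℝ) (w w' : Fin 3 → ℝ) :
    dirDot hd ξ (w - w') = dirDot hd ξ w - dirDot hd ξ w' :=
  dotProduct_sub ξ (w ∘ Fin.castLE hd) (w' ∘ Fin.castLE hd)

theorem dirDot_neg (ξ : Fin d → ℝ) (w : Fin 3 → ℝ) : dirDot hd (-ξ) w = -dirDot hd ξ w :=
  neg_dotProduct ξ _

theorem sum_mul_dirDot {ι : Type*} (s : Finset ι) (a : ι → ℝ) (ξ : ι → Fin d → ℝ)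
    (w : Fin 3 → ℝ) : ∑ j ∈ s, a j * dirDot hd (ξ j) w = dirDot hd (∑ j ∈ s, a j • ξ j) w := by
  have hdot : ∀ η : Fin d → ℝ, dirDot hd η w = η ⬝ᵥ (w ∘ Fin.castLE hd) := fun _ => rfl
  simp only [hdot, sum_dotProduct, smul_dotProduct, smul_eq_mul]

theorem sum_smul_dirFlux (pfun : ℝ → ℝ → ℝ) {ι : Type*} (s : Finset ι) (a : ι → ℝ)
    (ξ : ι → Fin d → ℝ) (U : MHDState) :
    ∑ j ∈ s, a j • dirFlux pfun hd (ξ j) U = dirFlux pfun hd (∑ j ∈ s, a j • ξ j) U := by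
  simp only [dirFlux, Finset.smul_sum, smul_smul, Finset.sum_apply, Pi.smul_apply, smul_eq_mul,
    Finset.sum_smul]
  exact Finset.sum_comm

theorem dirFlux_neg (pfun : ℝ → ℝ → ℝ) (ξ : Fin d → ℝ) (U : MHDState) :
    dirFlux pfun hd (-ξ) U = -dirFlux pfun hd ξ U := by
  simp only [dirFlux, Pi.neg_apply, neg_smul, Finset.sum_neg_distrib]

end Directions

section RelativeEnergy

theorem mom_mk (ρ : ℝ) (m B : Fin 3 → ℝ) (E : ℝ) : mom (mk ρ m B E) = m := by
  funext k; fin_cases k <;> rfl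

theorem magB_mk (ρ : ℝ) (m B : Fin 3 → ℝ) (E : ℝ) : magB (mk ρ m B E) = B := by
  funext k; fin_cases k <;> rfl

theorem dot8_nstar (U : MHDState) (vs Bs : Fin 3 → ℝ) :
    dot8 U (nstar vs Bs)
      = dens U * (sq3 vs / 2) - dot3 (mom U) vs - dot3 (magB U) Bs + toten U := by
  have hsum : dot8 U (nstar vs Bs) = U 0 * (sq3 vs / 2) + U 1 * -vs 0 + U 2 * -vs 1 + U 3 * -vs 2
      + U 4 * -Bs 0 + U 5 * -Bs 1 + U 6 * -Bs 2 + U 7 * 1 := Fin.sum_univ_eight _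
  have hm : dot3 (mom U) vs = U 1 * vs 0 + U 2 * vs 1 + U 3 * vs 2 := Fin.sum_univ_three _
  have hB : dot3 (magB U) Bs = U 4 * Bs 0 + U 5 * Bs 1 + U 6 * Bs 2 := Fin.sum_univ_three _
  rw [hsum, hm, hB, dens, toten]
  ring

theorem dot8_mk_nstar (ρ : ℝ) (m B : Fin 3 → ℝ) (E : ℝ) (vs Bs : Fin 3 → ℝ) :
    dot8 (mk ρ m B E) (nstar vs Bs) = ρ * (sq3 vs / 2) - dot3 m vs - dot3 B Bs + E := by
  rw [dot8_nstar, mom_mk, magB_mk]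
  rfl

theorem sq3_sub (a b : Fin 3 → ℝ) : sq3 (a - b) = sq3 a - 2 * dot3 a b + sq3 b := by
  rw [← norm_toLp_sq, WithLp.toLp_sub, norm_sub_sq_real, norm_toLp_sq, norm_toLp_sq, inner_toLp]

theorem mom_eq_smul_vel {U : MHDState} (hU : 0 < dens U) : mom U = dens U • vel U :=
  funext fun _ => (mul_div_cancel₀ _ hU.ne').symm

theorem toten_eq {U : MHDState} (hU : 0 < dens U) :
    toten U = (dens U * sq3 (vel U) + sq3 (magB U)) / 2 + intE U := by
  have hkin : sq3 (mom U) / dens U = dens U * sq3 (vel U) := by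
    rw [mom_eq_smul_vel hU, sq3, smul_dot3, dot3_smul, ← sq3]
    field_simp
  rw [intE, hkin]
  ring

/-- The energy of `U` relative to a background velocity `vs` and magnetic field `Bs`. It is affine
in `U`, and its positivity for all `vs`, `Bs` characterises admissibility. -/
def relE (U : MHDState) (vs Bs : Fin 3 → ℝ) : ℝ := dot8 U (nstar vs Bs) + sq3 Bs / 2

variable {U : MHDState} (vs Bs : Fin 3 → ℝ)

theorem relE_eq (hU : 0 < dens U) :
    relE U vs Bs = (dens U * sq3 (vel U - vs) + sq3 (magB U - Bs)) / 2 + intE U := by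
  rw [relE, dot8_nstar, mom_eq_smul_vel hU, smul_dot3, toten_eq hU, sq3_sub, sq3_sub]
  ring

theorem Gset_eq_GstarSet : Gset = GstarSet := by
  ext U
  refine and_congr_right fun hρ => ⟨fun hε vs Bs => ?_, fun h => ?_⟩
  · have hpos : 0 < relE U vs Bs := by
      have hv := mul_nonneg hρ.le (sq3_nonneg (vel U - vs))
      have hB := sq3_nonneg (magB U - Bs)
      rw [relE_eq vs Bs hρ]
      linarith
    exact hpos
  · have hself : relE U (vel U) (magB U) = intE U := by simp [relE_eq _ _ hρ, sq3, dot3]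
    exact hself ▸ h (vel U) (magB U)

theorem relE_pos (hU : U ∈ Gset) : 0 < relE U vs Bs :=
  (Gset_eq_GstarSet ▸ hU : U ∈ GstarSet).2 vs Bs

theorem kinetic_add_magnetic_le_relE (hU : U ∈ Gset) :
    (dens U * sq3 (vel U - vs) + sq3 (magB U - Bs)) / 2 ≤ relE U vs Bs := by
  linarith [relE_eq vs Bs hU.1, hU.2]

theorem magnetic_le_relE (hU : U ∈ Gset) : sq3 (magB U - Bs) / 2 ≤ relE U vs Bs := by
  linarith [kinetic_add_magnetic_le_relE vs Bs hU,
    mul_nonneg hU.1.le (sq3_nonneg (vel U - vs))]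

theorem dens_nonneg_of_relE_nonneg (h : ∀ vs, 0 ≤ relE U vs 0) : 0 ≤ dens U := by
  have hquad : ∀ t : ℝ, 0 ≤ toten U + dens U * t ^ 2 / 2 := fun t => by
    have hsq : sq3 ![t, 0, 0] = t ^ 2 := by simp [sq3, dot3, Fin.sum_univ_three, sq]
    have hpos := h ![t, 0, 0]
    have hneg := h (-![t, 0, 0])
    simp only [relE, dot8_nstar, sq3, dot3, ← dotProduct.eq_1, neg_dotProduct, dotProduct_neg,
      dotProduct_zero] at hpos hneg hsq
    rw [hsq] at hpos hneg
    linarith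
  by_contra! hρ
  obtain ⟨s, hs⟩ : ∃ s, toten U = s * -dens U :=
    ⟨_, (div_mul_cancel₀ _ (neg_ne_zero.2 hρ.ne)).symm⟩
  have hval : toten U + dens U * (s + 1) ^ 2 / 2 = dens U * ((s ^ 2 + 1) / 2) := by
    rw [hs]; ring
  exact (hquad (s + 1)).not_gt (hval ▸ mul_neg_of_neg_of_pos hρ (by positivity))

theorem abs_dot3_le_relE_div_sqrt (hU : U ∈ Gset) :
    |dot3 (vel U - vs) (magB U - Bs)| ≤ relE U vs Bs / √(dens U) := by
  have hs : 0 < √(dens U) := Real.sqrt_pos.2 hU.1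
  rw [le_div_iff₀ hs]
  calc |dot3 (vel U - vs) (magB U - Bs)| * √(dens U)
      ≤ ‖toLp 2 (vel U - vs)‖ * ‖toLp 2 (magB U - Bs)‖ * √(dens U) := by
        rw [← inner_toLp]; gcongr; exact abs_real_inner_le_norm _ _
    _ ≤ ((√(dens U) * ‖toLp 2 (vel U - vs)‖) ^ 2 + ‖toLp 2 (magB U - Bs)‖ ^ 2) / 2 := by
        linarith [two_mul_le_add_sq (√(dens U) * ‖toLp 2 (vel U - vs)‖) ‖toLp 2 (magB U - Bs)‖]
    _ = (dens U * sq3 (vel U - vs) + sq3 (magB U - Bs)) / 2 := by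
        rw [mul_pow, Real.sq_sqrt hU.1.le, norm_toLp_sq, norm_toLp_sq]
    _ ≤ relE U vs Bs := kinetic_add_magnetic_le_relE vs Bs hU

theorem dot8_source_nstar (U : MHDState) :
    dot8 (source U) (nstar vs Bs) = dot3 (vel U - vs) (magB U - Bs) - dot3 vs Bs := by
  rw [source, dot8_mk_nstar]
  simp only [dot3, ← dotProduct.eq_1, sub_dotProduct, dotProduct_sub]
  rw [dotProduct_comm (magB U) vs]
  ring

end RelativeEnergy

section WaveSpeed

variable (pfun : ℝ → ℝ → ℝ) {d : ℕ} (hd : d ≤ 3) {ξ : Fin d → ℝ} {U : MHDState}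

theorem add_sqrt_discrim_div_two_sq {s D : ℝ} (hD : 4 * D ≤ s ^ 2) :
    ((s + √(s ^ 2 - 4 * D)) / 2) ^ 2 - s * ((s + √(s ^ 2 - 4 * D)) / 2) + D = 0 := by
  linear_combination Real.sq_sqrt (sub_nonneg.2 hD) / 4

theorem waveC_nonneg : 0 ≤ waveC pfun hd ξ U := Real.sqrt_nonneg _

theorem waveC_sq (hU : 0 < dens U) :
    waveC pfun hd ξ U ^ 2 = (soundC pfun U ^ 2 + sq3 (magB U) / dens U
      + √((soundC pfun U ^ 2 + sq3 (magB U) / dens U) ^ 2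
        - 4 * (soundC pfun U ^ 2 * (dirDot hd ξ (magB U) ^ 2 / dens U)))) / 2 := by
  have hB := sq3_nonneg (magB U)
  rw [waveC, Real.sq_sqrt (by positivity), mul_assoc 4, mul_div_assoc 4, mul_div_assoc]

theorem trace_le_two_mul_waveC_sq (hU : 0 < dens U) :
    soundC pfun U ^ 2 + sq3 (magB U) / dens U ≤ 2 * waveC pfun hd ξ U ^ 2 := by
  rw [waveC_sq pfun hd hU, mul_div_cancel₀ _ two_ne_zero]
  exact le_add_of_nonneg_right (Real.sqrt_nonneg _)

theorem waveC_charpoly (hξ : unitVec ξ) (hU : 0 < dens U) :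
    (waveC pfun hd ξ U ^ 2) ^ 2
      - (soundC pfun U ^ 2 + sq3 (magB U) / dens U) * waveC pfun hd ξ U ^ 2
      + soundC pfun U ^ 2 * (dirDot hd ξ (magB U) ^ 2 / dens U) = 0 := by
  rw [waveC_sq pfun hd hU]
  apply add_sqrt_discrim_div_two_sq
  have hB : dirDot hd ξ (magB U) ^ 2 / dens U ≤ sq3 (magB U) / dens U := by
    gcongr; exact dirDot_sq_le hd hξ _
  calc 4 * (soundC pfun U ^ 2 * (dirDot hd ξ (magB U) ^ 2 / dens U))
      ≤ 4 * (soundC pfun U ^ 2 * (sq3 (magB U) / dens U)) := by gcongr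
    _ = 4 * soundC pfun U ^ 2 * (sq3 (magB U) / dens U) := by ring
    _ ≤ (soundC pfun U ^ 2 + sq3 (magB U) / dens U) ^ 2 := four_mul_le_sq_add _ _

theorem waveC_pos {pfun : ℝ → ℝ → ℝ} (hEOS : IsEOS pfun) (hU : U ∈ Gset) :
    0 < waveC pfun hd ξ U := by
  obtain ⟨hρ, hε⟩ := hU
  have he : 0 < specE U := div_pos hε hρ
  have hp : 0 < pres pfun U := (hEOS _ _ hρ).1 he
  have ha : 0 < soundC pfun U := by unfold soundC; positivity
  have hB := sq3_nonneg (magB U)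
  exact Real.sqrt_pos.2 (by positivity)

theorem waveC_neg : waveC pfun hd (-ξ) U = waveC pfun hd ξ U := by
  simp only [waveC, dirDot_neg, neg_sq]

theorem soundC_mul_sqrt (hU : U ∈ Gset) :
    soundC pfun U * √(2 * intE U) * √(dens U) = pres pfun U := by
  obtain ⟨hρ, hε⟩ := hU
  have he : 0 < specE U := div_pos hε hρ
  have hsqrt : √(2 * intE U) * √(dens U) = dens U * √(2 * specE U) := by
    have h : 2 * intE U = 2 * specE U * dens U := by rw [specE]; field_simp
    rw [h, Real.sqrt_mul' _ hρ.le, mul_assoc, Real.mul_self_sqrt hρ.le, mul_comm]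
  rw [mul_assoc, hsqrt, soundC, div_mul_cancel₀]
  positivity

/- `fast_coupling_le` for `x = √ρ w`, `β = B / √ρ` and `z = √(2 𝓔)`. -/
theorem flux_coupling_le (hξ : unitVec ξ) (hU : U ∈ Gset) (w b : Fin 3 → ℝ) :
    dirDot hd ξ w * (pres pfun U + dot3 (magB U) b) - dirDot hd ξ (magB U) * dot3 w b
      ≤ waveC pfun hd ξ U * ((dens U * sq3 w + sq3 b) / 2 + intE U) := by
  have hs : √(dens U) ^ 2 = dens U := Real.sq_sqrt hU.1.le
  have hs0 : √(dens U) ≠ 0 := (Real.sqrt_pos.2 hU.1).ne'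
  have hβ : ‖(√(dens U))⁻¹ • toLp 2 (magB U)‖ ^ 2 = sq3 (magB U) / dens U := by
    rw [norm_smul, mul_pow, norm_toLp_sq, norm_inv, inv_pow, Real.norm_eq_abs, sq_abs, hs,
      inv_mul_eq_div]
  have heβ : ⟪spatialDir hd ξ, (√(dens U))⁻¹ • toLp 2 (magB U)⟫
      = (√(dens U))⁻¹ * dirDot hd ξ (magB U) := by
    rw [real_inner_smul_right, inner_spatialDir]
  have hx : ‖√(dens U) • toLp 2 w‖ ^ 2 = dens U * sq3 w := by
    rw [norm_smul, mul_pow, norm_toLp_sq, Real.norm_eq_abs, sq_abs, hs]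
  have hz : √(2 * intE U) ^ 2 = 2 * intE U := Real.sq_sqrt (by linarith [hU.2])
  have key := fast_coupling_le (norm_spatialDir hd hξ) (waveC_nonneg pfun hd (ξ := ξ) (U := U))
    (hβ ▸ trace_le_two_mul_waveC_sq pfun hd hU.1)
    (by rw [hβ, heβ, mul_pow, inv_pow, hs, inv_mul_eq_div, waveC_charpoly pfun hd hξ hU.1])
    (√(dens U) • toLp 2 w) (toLp 2 b) √(2 * intE U)
  rw [heβ, hx, hz, norm_toLp_sq] at key
  simp only [real_inner_smul_left, real_inner_smul_right, inner_toLp, inner_spatialDir] at key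
  calc dirDot hd ξ w * (pres pfun U + dot3 (magB U) b) - dirDot hd ξ (magB U) * dot3 w b
      = √(dens U) * dirDot hd ξ w
          * (soundC pfun U * √(2 * intE U) + (√(dens U))⁻¹ * dot3 (magB U) b)
        - (√(dens U))⁻¹ * dirDot hd ξ (magB U) * (√(dens U) * dot3 w b) := by
        rw [← soundC_mul_sqrt pfun hU]; field_simp
    _ ≤ waveC pfun hd ξ U * ((dens U * sq3 w + sq3 b + 2 * intE U) / 2) := key
    _ = waveC pfun hd ξ U * ((dens U * sq3 w + sq3 b) / 2 + intE U) := by ring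

end WaveSpeed

section RoeAverage

variable {d : ℕ} (hd : d ≤ 3)

theorem roeV_comm (U Ut : MHDState) : roeV U Ut = roeV Ut U := by
  funext k; simp only [roeV, add_comm]

theorem sqrt_add_sqrt_smul_roeV_sub {U : MHDState} (hU : 0 < dens U) (Ut : MHDState)
    (vs : Fin 3 → ℝ) : (√(dens U) + √(dens Ut)) • (roeV U Ut - vs)
      = √(dens U) • (vel U - vs) + √(dens Ut) • (vel Ut - vs) := by
  have hs : √(dens U) + √(dens Ut) ≠ 0 :=
    (add_pos_of_pos_of_nonneg (Real.sqrt_pos.2 hU) (Real.sqrt_nonneg _)).ne'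
  funext k
  simp only [roeV, Pi.sub_apply, Pi.add_apply, Pi.smul_apply, smul_eq_mul]
  rw [mul_sub, mul_div_cancel₀ _ hs]
  ring

/-- The contribution `|B - B̃| / (√ρ + √ρ̃)` of the magnetic jump to the wave speeds. -/
def magJump (U Ut : MHDState) : ℝ := norm3 (magB U - magB Ut) / (√(dens U) + √(dens Ut))

theorem magJump_nonneg (U Ut : MHDState) : 0 ≤ magJump U Ut :=
  div_nonneg (Real.sqrt_nonneg _) (by positivity)

theorem magJump_comm (U Ut : MHDState) : magJump U Ut = magJump Ut U := by
  rw [magJump, magJump, norm3_sub_comm, add_comm]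

theorem roe_jump_le {ξ : Fin d → ℝ} (hξ : unitVec ξ) {U Ut : MHDState} (hU : U ∈ Gset)
    (hUt : Ut ∈ Gset) (vs Bs : Fin 3 → ℝ) :
    -dirDot hd ξ (roeV U Ut - vs) * ((sq3 (magB U - Bs) - sq3 (magB Ut - Bs)) / 2)
      ≤ magJump U Ut * (relE U vs Bs + relE Ut vs Bs) := by
  have hkin : ∀ V ∈ Gset, (‖toLp 2 (√(dens V) • (vel V - vs))‖ ^ 2
      + ‖toLp 2 (magB V - Bs)‖ ^ 2) / 2 ≤ relE V vs Bs := fun V hV => by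
    rw [WithLp.toLp_smul, norm_smul, mul_pow, Real.norm_eq_abs, sq_abs, Real.sq_sqrt hV.1.le,
      norm_toLp_sq, norm_toLp_sq]
    exact kinetic_add_magnetic_le_relE vs Bs hV
  have key := neg_inner_add_mul_norm_sq_sub_le (norm_spatialDir hd hξ)
    (toLp 2 (√(dens U) • (vel U - vs))) (toLp 2 (√(dens Ut) • (vel Ut - vs)))
    (toLp 2 (magB U - Bs)) (toLp 2 (magB Ut - Bs))
  rw [← WithLp.toLp_add, ← sqrt_add_sqrt_smul_roeV_sub hU.1, WithLp.toLp_smul,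
    real_inner_smul_right, inner_spatialDir, ← WithLp.toLp_sub, sub_sub_sub_cancel_right] at key
  have hs : 0 < √(dens U) + √(dens Ut) :=
    add_pos_of_pos_of_nonneg (Real.sqrt_pos.2 hU.1) (Real.sqrt_nonneg _)
  rw [magJump, div_mul_eq_mul_div, le_div_iff₀ hs]
  calc -dirDot hd ξ (roeV U Ut - vs) * ((sq3 (magB U - Bs) - sq3 (magB Ut - Bs)) / 2)
        * (√(dens U) + √(dens Ut))
      = -((√(dens U) + √(dens Ut)) * dirDot hd ξ (roeV U Ut - vs))
        * ((‖toLp 2 (magB U - Bs)‖ ^ 2 - ‖toLp 2 (magB Ut - Bs)‖ ^ 2) / 2) := by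
        rw [norm_toLp_sq, norm_toLp_sq]; ring
    _ ≤ _ := key
    _ ≤ norm3 (magB U - magB Ut) * (relE U vs Bs + relE Ut vs Bs) := by
        rw [norm_toLp]
        exact mul_le_mul_of_nonneg_left (add_le_add (hkin U hU) (hkin Ut hUt))
          (Real.sqrt_nonneg _)

end RoeAverage

section Flux

variable (pfun : ℝ → ℝ → ℝ) {d : ℕ} (hd : d ≤ 3) {ξ : Fin d → ℝ} {U : MHDState}
  (vs Bs : Fin 3 → ℝ)

theorem dot8_flux_nstar (i : Fin 3) (hU : 0 < dens U) :
    dot8 (flux pfun i U) (nstar vs Bs)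
      = vel U i * (relE U vs Bs - sq3 (magB U - Bs) / 2) + vs i * (sq3 (magB U - Bs) / 2)
        + ((vel U - vs) i * (pres pfun U + dot3 (magB U) (magB U - Bs))
          - magB U i * dot3 (vel U - vs) (magB U - Bs))
        + magB U i * dot3 vs Bs - vs i * (sq3 Bs / 2) := by
  rw [relE_eq vs Bs hU, flux, dot8_mk_nstar, toten_eq hU, ptot]
  generalize vel U = v
  generalize magB U = B
  generalize pres pfun U = p
  generalize intE U = ε
  generalize dens U = ρ
  have hmom : (fun k => ρ * v i * v k - B i * B k + (p + sq3 B / 2) * if k = i then 1 else 0)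
      = (ρ * v i) • v - B i • B + (p + sq3 B / 2) • Pi.single i 1 := by
    funext k
    simp only [Pi.add_apply, Pi.sub_apply, Pi.smul_apply, Pi.single_apply, smul_eq_mul]
  have hmag : (fun k => v i * B k - B i * v k) = v i • B - B i • v := rfl
  rw [hmom, hmag]
  simp only [sq3, dot3, ← dotProduct.eq_1, add_dotProduct, sub_dotProduct, smul_dotProduct,
    single_one_dotProduct, dotProduct_sub, smul_eq_mul]
  rw [Pi.sub_apply, dotProduct_comm vs v, dotProduct_comm Bs B, dotProduct_comm vs B,
    dotProduct_comm v B]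
  ring

theorem dot8_dirFlux_nstar (hU : 0 < dens U) :
    dot8 (dirFlux pfun hd ξ U) (nstar vs Bs)
      = dirDot hd ξ (vel U) * (relE U vs Bs - sq3 (magB U - Bs) / 2)
        + dirDot hd ξ vs * (sq3 (magB U - Bs) / 2)
        + (dirDot hd ξ (vel U - vs) * (pres pfun U + dot3 (magB U) (magB U - Bs))
          - dirDot hd ξ (magB U) * dot3 (vel U - vs) (magB U - Bs))
        + dirDot hd ξ (magB U) * dot3 vs Bs - dirDot hd ξ vs * (sq3 Bs / 2) := by
  have hsum : dot8 (dirFlux pfun hd ξ U) (nstar vs Bs)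
      = ∑ k, ξ k * dot8 (flux pfun (Fin.castLE hd k) U) (nstar vs Bs) := by
    simp only [dot8, ← dotProduct.eq_1, dirFlux, sum_dotProduct, smul_dotProduct, smul_eq_mul]
  simp only [hsum, dot8_flux_nstar pfun vs Bs _ hU, dirDot, Finset.sum_mul,
    ← Finset.sum_add_distrib, ← Finset.sum_sub_distrib]
  exact Finset.sum_congr rfl fun k _ => by ring

theorem alphaL_eq_neg_alphaR_neg (U Ut : MHDState) :
    alphaL pfun hd ξ U Ut = -alphaR pfun hd (-ξ) U Ut := by
  simp only [alphaL, alphaR, dirDot_neg, waveC_neg, max_neg_neg]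
  ring

theorem alphaR_eq (ξ : Fin d → ℝ) (U Ut : MHDState) : alphaR pfun hd ξ U Ut
    = max (dirDot hd ξ (vel U)) (dirDot hd ξ (roeV U Ut)) + waveC pfun hd ξ U + magJump U Ut :=
  rfl

theorem alphaL_lt_alphaR {pfun : ℝ → ℝ → ℝ} (hEOS : IsEOS pfun) (hU : U ∈ Gset)
    (Ut : MHDState) : alphaL pfun hd ξ U Ut < alphaR pfun hd ξ Ut U := by
  rw [alphaL_eq_neg_alphaR_neg, alphaR_eq, alphaR_eq, waveC_neg, dirDot_neg, dirDot_neg,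
    roeV_comm Ut]
  linarith [waveC_pos hd (ξ := ξ) hEOS hU, waveC_nonneg pfun hd (ξ := ξ) (U := Ut),
    magJump_nonneg U Ut, magJump_nonneg Ut U,
    le_max_right (-dirDot hd ξ (vel U)) (-dirDot hd ξ (roeV U Ut)),
    le_max_right (dirDot hd ξ (vel Ut)) (dirDot hd ξ (roeV U Ut))]

theorem dot8_dirFlux_nstar_le (hξ : unitVec ξ) (hU : U ∈ Gset) (Ut : MHDState) :
    dot8 (dirFlux pfun hd ξ U) (nstar vs Bs)
      ≤ (alphaR pfun hd ξ U Ut - magJump U Ut) * relE U vs Bs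
        - dirDot hd ξ (roeV U Ut - vs) * (sq3 (magB U - Bs) / 2)
        + dirDot hd ξ (magB U) * dot3 vs Bs - dirDot hd ξ vs * (sq3 Bs / 2) := by
  have hcoupling := flux_coupling_le pfun hd hξ hU (vel U - vs) (magB U - Bs)
  rw [← relE_eq vs Bs hU.1] at hcoupling
  have hkin : dirDot hd ξ (vel U) * (relE U vs Bs - sq3 (magB U - Bs) / 2)
      ≤ max (dirDot hd ξ (vel U)) (dirDot hd ξ (roeV U Ut))
        * (relE U vs Bs - sq3 (magB U - Bs) / 2) :=
    mul_le_mul_of_nonneg_right (le_max_left _ _) (sub_nonneg.2 (magnetic_le_relE vs Bs hU))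
  have hmag : dirDot hd ξ (roeV U Ut) * (sq3 (magB U - Bs) / 2)
      ≤ max (dirDot hd ξ (vel U)) (dirDot hd ξ (roeV U Ut)) * (sq3 (magB U - Bs) / 2) :=
    mul_le_mul_of_nonneg_right (le_max_right _ _) (div_nonneg (sq3_nonneg _) zero_le_two)
  rw [dot8_dirFlux_nstar pfun hd vs Bs hU.1, alphaR_eq,
    dirDot_sub hd ξ (roeV U Ut)]
  linarith

end Flux

section HLL

variable {pfun : ℝ → ℝ → ℝ} {d : ℕ} {hd : d ≤ 3} {ξ : Fin d → ℝ} {Um Up : MHDState}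
  {σm σp : ℝ}

theorem hllFlux_eq_smul_hllMid (h : σm < σp) : hllFlux pfun hd ξ Um Up σm σp
    = σm • hllMid pfun hd ξ Um Up σm σp + dirFlux pfun hd ξ Um - σm • Um := by
  have hσ : σp - σm ≠ 0 := (sub_pos.2 h).ne'
  funext i
  simp only [hllFlux, hllMid, Pi.smul_apply, Pi.add_apply, Pi.sub_apply, smul_eq_mul]
  field_simp
  ring

theorem relE_hllMid (h : σm < σp) (vs Bs : Fin 3 → ℝ) :
    relE (hllMid pfun hd ξ Um Up σm σp) vs Bs = (σp - σm)⁻¹ *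
      ((σp * relE Up vs Bs - dot8 (dirFlux pfun hd ξ Up) (nstar vs Bs))
        - (σm * relE Um vs Bs - dot8 (dirFlux pfun hd ξ Um) (nstar vs Bs))) := by
  have hσ : σp - σm ≠ 0 := (sub_pos.2 h).ne'
  simp only [relE, dot8, ← dotProduct.eq_1, hllMid, smul_dotProduct, add_dotProduct,
    sub_dotProduct, smul_eq_mul]
  field_simp
  ring

theorem relE_hllMid_ge (hξ : unitVec ξ) (hUm : Um ∈ Gset) (hUp : Up ∈ Gset)
    (hl : σm ≤ alphaL pfun hd ξ Um Up) (hr : alphaR pfun hd ξ Up Um ≤ σp) (h : σm < σp)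
    (vs Bs : Fin 3 → ℝ) :
    -((dirDot hd ξ (magB Up) - dirDot hd ξ (magB Um)) / (σp - σm) * dot3 vs Bs)
      ≤ relE (hllMid pfun hd ξ Um Up σm σp) vs Bs := by
  have hξneg : unitVec (-ξ) := by simpa only [unitVec, Pi.neg_apply, neg_sq] using hξ
  have hp := dot8_dirFlux_nstar_le pfun hd vs Bs hξ hUp Um
  have hm : -dot8 (dirFlux pfun hd ξ Um) (nstar vs Bs)
      ≤ (-alphaL pfun hd ξ Um Up - magJump Up Um) * relE Um vs Bs
        + dirDot hd ξ (roeV Up Um - vs) * (sq3 (magB Um - Bs) / 2)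
        - dirDot hd ξ (magB Um) * dot3 vs Bs + dirDot hd ξ vs * (sq3 Bs / 2) := by
    have h := dot8_dirFlux_nstar_le pfun hd vs Bs hξneg hUm Up
    simp only [dirFlux_neg, dirDot_neg, dot8, ← dotProduct.eq_1, neg_dotProduct] at h
    rw [alphaL_eq_neg_alphaR_neg, magJump_comm, roeV_comm]
    simp only [dot8, ← dotProduct.eq_1]
    linarith
  have hjump := roe_jump_le hd hξ hUp hUm vs Bs
  have hσp := mul_le_mul_of_nonneg_right hr (relE_pos vs Bs hUp).le
  have hσm := mul_le_mul_of_nonneg_right hl (relE_pos vs Bs hUm).le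
  rw [relE_hllMid h, div_mul_eq_mul_div, ← neg_div, div_eq_inv_mul]
  exact mul_le_mul_of_nonneg_left (by linarith) (inv_nonneg.2 (sub_pos.2 h).le)

end HLL

section Scheme

variable {ι : Type*} [Fintype ι]

theorem relE_combination_sub_source (c : ι → ℝ) (D : ℝ) (U : MHDState) (H : ι → MHDState)
    (vs Bs : Fin 3 → ℝ) :
    relE ((1 - ∑ j, c j) • U + ∑ j, c j • H j - D • source U) vs Bs
      = (1 - ∑ j, c j) * relE U vs Bs + ∑ j, c j * relE (H j) vs Bs
        - D * (dot3 (vel U - vs) (magB U - Bs) - dot3 vs Bs) := by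
  rw [← dot8_source_nstar]
  simp only [relE, dot8, ← dotProduct.eq_1, sub_dotProduct, add_dotProduct, smul_dotProduct,
    sum_dotProduct, smul_eq_mul, mul_add, Finset.sum_add_distrib, ← Finset.sum_mul]
  ring

theorem combination_sub_source_mem_Gset {U : MHDState} (hU : U ∈ Gset) {c κ : ι → ℝ}
    {H : ι → MHDState} (hc : ∀ j, 0 ≤ c j)
    (hH : ∀ j vs Bs, -(κ j * dot3 vs Bs) ≤ relE (H j) vs Bs)
    (hsum : ∑ j, c j + |∑ j, c j * κ j| / √(dens U) < 1) :
    (1 - ∑ j, c j) • U + ∑ j, c j • H j - (∑ j, c j * κ j) • source U ∈ Gset := by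
  rw [Gset_eq_GstarSet]
  refine ⟨?_, fun vs Bs => ?_⟩
  · have hdensH : ∀ j, 0 ≤ dens (H j) := fun j =>
      dens_nonneg_of_relE_nonneg fun vs => by simpa [dot3] using hH j vs 0
    have hdens : dens ((1 - ∑ j, c j) • U + ∑ j, c j • H j - (∑ j, c j * κ j) • source U)
        = (1 - ∑ j, c j) * dens U + ∑ j, c j * dens (H j) := by
      simp [dens, source, mk]
    rw [hdens]
    have hdiv : 0 ≤ |∑ j, c j * κ j| / √(dens U) := by positivity
    exact add_pos_of_pos_of_nonneg (mul_pos (by linarith) hU.1)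
      (Finset.sum_nonneg fun j _ => mul_nonneg (hc j) (hdensH j))
  · have hHLL : -((∑ j, c j * κ j) * dot3 vs Bs) ≤ ∑ j, c j * relE (H j) vs Bs := by
      rw [Finset.sum_mul, ← Finset.sum_neg_distrib]
      exact Finset.sum_le_sum fun j _ => by
        linarith [mul_le_mul_of_nonneg_left (hH j vs Bs) (hc j)]
    have hsource : (∑ j, c j * κ j) * dot3 (vel U - vs) (magB U - Bs)
        ≤ |∑ j, c j * κ j| / √(dens U) * relE U vs Bs :=
      calc _ ≤ |∑ j, c j * κ j| * |dot3 (vel U - vs) (magB U - Bs)| :=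
            (le_abs_self _).trans (abs_mul _ _).le
        _ ≤ |∑ j, c j * κ j| * (relE U vs Bs / √(dens U)) := by
            gcongr; exact abs_dot3_le_relE_div_sqrt vs Bs hU
        _ = |∑ j, c j * κ j| / √(dens U) * relE U vs Bs := by ring
    have hmargin := mul_pos (sub_pos.2 hsum) (relE_pos vs Bs hU)
    suffices 0 < relE ((1 - ∑ j, c j) • U + ∑ j, c j • H j
        - (∑ j, c j * κ j) • source U) vs Bs from this
    rw [relE_combination_sub_source]
    linarith

variable (pfun : ℝ → ℝ → ℝ) {d : ℕ} (hd : d ≤ 3) {len : ι → ℝ} {ξ : ι → Fin d → ℝ}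
  {UK : MHDState} {Un : ι → MHDState} {σm σp : ι → ℝ}

theorem sub_smul_sum_hllFlux (hGreen : ∑ j, len j • ξ j = 0) (hσ : ∀ j, σm j < σp j) (τ : ℝ) :
    UK - τ • ∑ j, len j • hllFlux pfun hd (ξ j) UK (Un j) (σm j) (σp j)
      = (1 - ∑ j, τ * (len j * -σm j)) • UK
        + ∑ j, (τ * (len j * -σm j)) • hllMid pfun hd (ξ j) UK (Un j) (σm j) (σp j) := by
  have hflux : ∑ j, len j • dirFlux pfun hd (ξ j) UK = 0 := by
    rw [sum_smul_dirFlux, hGreen]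
    simp only [dirFlux, Pi.zero_apply, zero_smul, Finset.sum_const_zero]
  have hsplit : ∀ j, len j • hllFlux pfun hd (ξ j) UK (Un j) (σm j) (σp j)
      = len j • dirFlux pfun hd (ξ j) UK + (len j * -σm j) • UK
        - (len j * -σm j) • hllMid pfun hd (ξ j) UK (Un j) (σm j) (σp j) := fun j => by
    rw [hllFlux_eq_smul_hllMid (hσ j)]
    module
  simp only [hsplit, Finset.sum_sub_distrib, Finset.sum_add_distrib, hflux, zero_add,
    ← Finset.sum_smul, mul_smul τ, ← Finset.smul_sum, ← Finset.mul_sum _ _ τ]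
  module

theorem sum_dirDot_hllAverage (hGreen : ∑ j, len j • ξ j = 0) (hσ : ∀ j, σm j < σp j) :
    ∑ j, len j * dirDot hd (ξ j)
        (fun k => (σp j * magB UK k - σm j * magB (Un j) k) / (σp j - σm j))
      = ∑ j, len j * -σm j
          * ((dirDot hd (ξ j) (magB (Un j)) - dirDot hd (ξ j) (magB UK)) / (σp j - σm j)) := by
  have hmean : ∀ j, (fun k => (σp j * magB UK k - σm j * magB (Un j) k) / (σp j - σm j))
      = magB UK + (-σm j / (σp j - σm j)) • (magB (Un j) - magB UK) := fun j => by
    have h : σp j - σm j ≠ 0 := (sub_pos.2 (hσ j)).ne'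
    funext k
    simp only [Pi.add_apply, Pi.smul_apply, Pi.sub_apply, smul_eq_mul]
    field_simp
    ring
  have hGreenB : ∑ j, len j * dirDot hd (ξ j) (magB UK) = 0 := by
    rw [sum_mul_dirDot, hGreen]
    exact zero_dotProduct _
  have hsplit : ∀ j, len j * dirDot hd (ξ j)
        (magB UK + (-σm j / (σp j - σm j)) • (magB (Un j) - magB UK))
      = len j * dirDot hd (ξ j) (magB UK) + len j * -σm j
          * ((dirDot hd (ξ j) (magB (Un j)) - dirDot hd (ξ j) (magB UK)) / (σp j - σm j)) :=
    fun j => by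
      rw [dirDot_add, dirDot_smul, dirDot_sub]
      ring
  simp only [hmean, hsplit, Finset.sum_add_distrib, hGreenB, zero_add]

end Scheme

theorem twoD_first_order_scheme_PP_general (pfun : ℝ → ℝ → ℝ) {d : ℕ} (hd : d ≤ 3)
    {ι : Type*} [Fintype ι] {areaK : ℝ} (hK : 0 < areaK) {len : ι → ℝ} (hlen : ∀ j, 0 ≤ len j)
    {ξ : ι → Fin d → ℝ} (hξ : ∀ j, unitVec (ξ j)) (hGreen : ∑ j, len j • ξ j = 0)
    {UK : MHDState} (hUK : UK ∈ Gset) {Un : ι → MHDState} (hUn : ∀ j, Un j ∈ Gset)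
    {σm σp : ι → ℝ} (hσm : ∀ j, σm j ≤ 0) (hσ : ∀ j, σm j < σp j)
    (hl : ∀ j, σm j ≤ alphaL pfun hd (ξ j) UK (Un j))
    (hr : ∀ j, alphaR pfun hd (ξ j) (Un j) UK ≤ σp j)
    {Δt : ℝ} (hΔt : 0 ≤ Δt) {div : ℝ}
    (hdiv : div = areaK⁻¹ * ∑ j, len j * dirDot hd (ξ j)
      (fun k => (σp j * magB UK k - σm j * magB (Un j) k) / (σp j - σm j)))
    (hCFL : Δt * (areaK⁻¹ * ∑ j, len j * -σm j + |div| / √(dens UK)) < 1) :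
    UK - (Δt / areaK) • ∑ j, len j • hllFlux pfun hd (ξ j) UK (Un j) (σm j) (σp j)
      - (Δt * div) • source UK ∈ Gset := by
  have hsource : Δt * div = ∑ j, Δt / areaK * (len j * -σm j)
      * ((dirDot hd (ξ j) (magB (Un j)) - dirDot hd (ξ j) (magB UK)) / (σp j - σm j)) := by
    rw [hdiv, sum_dirDot_hllAverage hd hGreen hσ, ← mul_assoc, ← div_eq_mul_inv, Finset.mul_sum]
    simp only [mul_assoc]
  rw [sub_smul_sum_hllFlux pfun hd hGreen hσ, hsource]
  refine combination_sub_source_mem_Gset hUK (fun j => ?_)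
    (fun j => relE_hllMid_ge (hξ j) hUK (hUn j) (hl j) (hr j) (hσ j)) ?_
  · exact mul_nonneg (div_nonneg hΔt hK.le) (mul_nonneg (hlen j) (neg_nonneg.2 (hσm j)))
  · rwa [← hsource, abs_mul, abs_of_nonneg hΔt, ← Finset.mul_sum, div_eq_mul_inv, mul_assoc,
      mul_div_assoc, ← mul_add]

/-- Theorem 4.1: positivity preservation of the first-order 2D scheme with
the Godunov–Powell penalty source term (one cell, one step). -/
theorem twoD_first_order_scheme_PP (pfun : ℝ → ℝ → ℝ) (hEOS : IsEOS pfun)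
    {N : ℕ} (hN : 1 ≤ N)
    (areaK : ℝ) (hK : 0 < areaK)
    (len : Fin N → ℝ) (hlen : ∀ j, 0 < len j)
    (ξ : Fin N → Fin 2 → ℝ) (hξ : ∀ j, unitVec (ξ j))
    (hGreen : (∑ j, len j • ξ j) = 0)
    (UK : MHDState) (hUK : UK ∈ Gset)
    (Un : Fin N → MHDState) (hUn : ∀ j, Un j ∈ Gset)
    (σr σl : Fin N → ℝ)
    (hr : ∀ j, alphaR pfun d2le3 (ξ j) (Un j) UK ≤ σr j)
    (hl : ∀ j, σl j ≤ alphaL pfun d2le3 (ξ j) UK (Un j))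
    (Δt : ℝ) (hΔt : 0 < Δt)
    (div : ℝ)
    (hdiv : div = areaK⁻¹ *
      ∑ j, len j * dirDot d2le3 (ξ j)
        (fun k => (max (σr j) 0 * magB UK k - min (σl j) 0 * magB (Un j) k)
          / (max (σr j) 0 - min (σl j) 0)))
    (hCFL : Δt * (areaK⁻¹ * (∑ j, len j * (-min (σl j) 0))
        + |div| / Real.sqrt (dens UK)) < 1) :
    UK - (Δt / areaK) •
        (∑ j, len j • hllFlux pfun d2le3 (ξ j) UK (Un j) (min (σl j) 0) (max (σr j) 0))
      - (Δt * div) • source UK ∈ Gset := by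
  have hσ : ∀ j, min (σl j) 0 < max (σr j) 0 := fun j =>
    calc min (σl j) 0 ≤ alphaL pfun d2le3 (ξ j) UK (Un j) := (min_le_left _ _).trans (hl j)
      _ < alphaR pfun d2le3 (ξ j) (Un j) UK := alphaL_lt_alphaR d2le3 hEOS hUK (Un j)
      _ ≤ max (σr j) 0 := (hr j).trans (le_max_left _ _)
  exact twoD_first_order_scheme_PP_general pfun d2le3 hK (fun j => (hlen j).le) hξ hGreen hUK hUn
    (fun _ => min_le_right _ _) hσ (fun j => (min_le_left _ _).trans (hl j))
    (fun j => (hr j).trans (le_max_left _ _)) hΔt.le hdiv hCFL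

end MHD
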